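/- With the above finite-volume Gibbs setup over E = ℤ, the function f is log-concave: f(a)² ≥ f(a + c)·f(a − c) for all a, c ∈ ℤ. -/

import Mathlib

/-!
The function `f` is log-concave because `e^{-H}` is log-supermodular after a shift. Shifting the
second configuration up by `c ≥ 0` leaves its gradients unchanged and turns its boundary condition
into `ψ + c ≥ ψ`. If `φ x₀ = a + c` and `θ = φ' + c` with `φ' x₀ = a - c`, then `φ ⊓ θ` has boundary
condition `ψ` and `φ ⊔ θ` has boundary condition `ψ + c`, with values `a` and `a + c` at `x₀`.
So `φ ⊓ θ` and `φ ⊔ θ - c` both contribute to `f a`. Convexity of the edge potentials gives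
`H (φ ⊓ θ) + H (φ ⊔ θ - c) ≤ H φ + H (θ - c)` (`gibbsH_shift_submodular`), edge by edge. The map
`(φ, θ) ↦ (φ ⊓ θ, φ ⊔ θ)` is not injective, so the pointwise inequality does not sum directly.
The Ahlswede–Daykin four functions theorem on the distributive lattice `Λ → ℤ`, extended to
infinite sums in `tsum_mul_tsum_le_of_four_functions`, does the summation.
-/

open scoped ENNReal

noncomputable section

/-- `e^{-t}` for `t ∈ ℝ ∪ {±∞}` (with `e^{-∞} = 0` when `t = ∞`). -/
def expNegE (t : EReal) : ℝ≥0∞ :=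
  if t = ⊤ then 0 else if t = ⊥ then ⊤ else ENNReal.ofReal (Real.exp (-t.toReal))

/-- Extension of `φ : Λ → ℤ` to the whole vertex set by the boundary condition `ψ`. -/
def extBC {ι : Type*} [DecidableEq ι] (Λ : Finset ι) (ψ : ι → ℤ) (φ : ↥Λ → ℤ) : ι → ℤ :=
  fun v => if h : v ∈ Λ then φ ⟨v, h⟩ else ψ v

/-- The Hamiltonian `H(φ) = Σ_{(x,y) ∈ 𝔈} V_{(x,y)} (φ y - φ x)`, where `φ` is extended by
the boundary condition `ψ` off `Λ`, and `W e` is the convex function on `ℝ` whose restriction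
to `ℤ` is the edge potential. -/
def gibbsH {ι : Type*} [DecidableEq ι] (Λ : Finset ι) (𝔈 : Finset (ι × ι))
    (W : ι × ι → ℝ → EReal) (ψ : ι → ℤ) (φ : ↥Λ → ℤ) : EReal :=
  ∑ e ∈ 𝔈, W e ((extBC Λ ψ φ e.2 - extBC Λ ψ φ e.1 : ℤ) : ℝ)

open scoped FinsetFamily

/-- The Ahlswede–Daykin four functions theorem for finite weights summed over a whole,
possibly infinite, distributive lattice. -/
lemma tsum_mul_tsum_le_of_four_functions {α : Type*} [DistribLattice α] [DecidableEq α]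
    (f₁ f₂ f₃ f₄ : α → ℝ≥0∞) (h₁ : ∀ a, f₁ a ≠ ⊤) (h₂ : ∀ a, f₂ a ≠ ⊤) (h₃ : ∀ a, f₃ a ≠ ⊤)
    (h₄ : ∀ a, f₄ a ≠ ⊤) (h : ∀ a b, f₁ a * f₂ b ≤ f₃ (a ⊓ b) * f₄ (a ⊔ b)) :
    (∑' a, f₁ a) * (∑' a, f₂ a) ≤ (∑' a, f₃ a) * (∑' a, f₄ a) := by
  lift f₁ to α → NNReal using h₁
  lift f₂ to α → NNReal using h₂
  lift f₃ to α → NNReal using h₃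
  lift f₄ to α → NNReal using h₄
  have h' : ∀ a b, f₁ a * f₂ b ≤ f₃ (a ⊓ b) * f₄ (a ⊔ b) := fun a b => by
    have := h a b
    beta_reduce at this
    exact_mod_cast this
  rw [ENNReal.tsum_eq_iSup_sum, ENNReal.tsum_eq_iSup_sum (f := fun a => (f₂ a : ℝ≥0∞)),
    ENNReal.iSup_mul]
  refine iSup_le fun s => ?_
  rw [ENNReal.mul_iSup]
  refine iSup_le fun t => ?_
  have key := four_functions_theorem f₁ f₂ f₃ f₄ (fun _ => zero_le) (fun _ => zero_le)
    (fun _ => zero_le) (fun _ => zero_le) h' s t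
  calc (∑ a ∈ s, (f₁ a : ℝ≥0∞)) * ∑ a ∈ t, (f₂ a : ℝ≥0∞)
      ≤ (∑ a ∈ s ⊼ t, (f₃ a : ℝ≥0∞)) * ∑ a ∈ s ⊻ t, (f₄ a : ℝ≥0∞) := by exact_mod_cast key
    _ ≤ _ := mul_le_mul' (ENNReal.sum_le_tsum _) (ENNReal.sum_le_tsum _)

lemma expNegE_antitone {s t : EReal} (h : s ≤ t) : expNegE t ≤ expNegE s := by
  unfold expNegE
  induction s <;> induction t <;> simp_all
  exact ENNReal.ofReal_le_ofReal (Real.exp_le_exp.2 (neg_le_neg h))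

lemma expNegE_ne_top {t : EReal} (h : t ≠ ⊥) : expNegE t ≠ ⊤ := by
  unfold expNegE
  split_ifs <;> simp

lemma expNegE_add {s t : EReal} (hs : s ≠ ⊥) (ht : t ≠ ⊥) :
    expNegE (s + t) = expNegE s * expNegE t := by
  induction s with
  | bot => exact absurd rfl hs
  | top => simp [EReal.top_add_of_ne_bot ht, expNegE]
  | coe s =>
    induction t with
    | bot => exact absurd rfl ht
    | top => simp [expNegE]
    | coe t =>
      have h : ∀ r : ℝ, expNegE (r : EReal) = ENNReal.ofReal (Real.exp (-r)) := fun r => by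
        simp [expNegE]
      rw [← EReal.coe_add, h, h, h, ← ENNReal.ofReal_mul (Real.exp_nonneg _), ← Real.exp_add]
      congr 2
      ring

lemma add_ne_bot {s t : EReal} (hs : s ≠ ⊥) (ht : t ≠ ⊥) : s + t ≠ ⊥ := by
  simp [EReal.add_eq_bot_iff, hs, ht]

lemma sum_ne_bot {α : Type*} (s : Finset α) (g : α → EReal) (h : ∀ i ∈ s, g i ≠ ⊥) :
    ∑ i ∈ s, g i ≠ ⊥ := by
  classical
  induction s using Finset.induction_on with
  | empty => simp
  | insert i s hi ih =>
    rw [Finset.sum_insert hi]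
    exact add_ne_bot (h i (Finset.mem_insert_self i s))
      (ih fun j hj => h j (Finset.mem_insert_of_mem hj))

/-- A convex function has a larger sum over the outer pair `A, D` than over an inner pair `B, C`
with the same midpoint. -/
lemma convex_inner_le_outer (V : ℝ → EReal) (hbot : ∀ r, V r ≠ ⊥)
    (hconv : ∀ a b t : ℝ, 0 ≤ t → t ≤ 1 →
      V (t * a + (1 - t) * b) ≤ (t : EReal) * V a + ((1 - t : ℝ) : EReal) * V b)
    {A B C D : ℝ} (hAB : A ≤ B) (hAC : A ≤ C) (hsum : B + C = A + D) :
    V B + V C ≤ V A + V D := by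
  rcases eq_or_lt_of_le (show A ≤ D by linarith) with hAD | hAD
  · have hB : B = A := by linarith
    have hC : C = D := by linarith
    rw [hB, hC]
  by_cases hA : V A = ⊤
  · rw [hA, EReal.top_add_of_ne_bot (hbot D)]; exact le_top
  by_cases hD : V D = ⊤
  · rw [hD, EReal.add_top_of_ne_bot (hbot A)]; exact le_top
  -- `B` and `C` are the convex combinations of `A` and `D` with weights `t` and `1 - t` on `A`.
  set t : ℝ := (D - B) / (D - A) with ht
  have hDA : 0 < D - A := by linarith
  have ht0 : 0 ≤ t := div_nonneg (by linarith) hDA.le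
  have ht1 : t ≤ 1 := (div_le_one hDA).2 (by linarith)
  have htm : t * (D - A) = D - B := div_mul_cancel₀ _ hDA.ne'
  have hB := hconv A D t ht0 ht1
  have hC := hconv A D (1 - t) (by linarith) (by linarith)
  rw [show t * A + (1 - t) * D = B by linarith] at hB
  rw [show (1 - t) * A + (1 - (1 - t)) * D = C by linarith] at hC
  refine (add_le_add hB hC).trans (le_of_eq ?_)
  rw [← EReal.coe_toReal hA (hbot A), ← EReal.coe_toReal hD (hbot D)]
  norm_cast
  ring

lemma convex_edge_submodular (V : ℝ → EReal) (hbot : ∀ r, V r ≠ ⊥)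
    (hconv : ∀ a b t : ℝ, 0 ≤ t → t ≤ 1 →
      V (t * a + (1 - t) * b) ≤ (t : EReal) * V a + ((1 - t : ℝ) : EReal) * V b)
    (p q p' q' : ℤ) :
    V ((q ⊓ q' - p ⊓ p' : ℤ) : ℝ) + V ((q ⊔ q' - p ⊔ p' : ℤ) : ℝ)
      ≤ V ((q - p : ℤ) : ℝ) + V ((q' - p' : ℤ) : ℝ) := by
  rcases le_total p p' with hp | hp <;> rcases le_total q q' with hq | hq <;>
    simp only [inf_of_le_left, inf_of_le_right, sup_of_le_left, sup_of_le_right, hp, hq]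
  · exact le_rfl
  · rw [add_comm (V ((q - p : ℤ) : ℝ))]
    apply convex_inner_le_outer V hbot hconv
    · exact_mod_cast (by lia)
    · exact_mod_cast (by lia)
    · push_cast; ring
  · apply convex_inner_le_outer V hbot hconv
    · exact_mod_cast (by lia)
    · exact_mod_cast (by lia)
    · push_cast; ring
  · exact (add_comm _ _).le

section Gibbs

variable {ι : Type*} [DecidableEq ι] (Λ : Finset ι) (𝔈 : Finset (ι × ι))
  (W : ι × ι → ℝ → EReal) (ψ : ι → ℤ)

lemma gibbsH_ne_bot (hWbot : ∀ e ∈ 𝔈, ∀ r : ℝ, W e r ≠ ⊥) (φ : ↥Λ → ℤ) :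
    gibbsH Λ 𝔈 W ψ φ ≠ ⊥ :=
  sum_ne_bot _ _ fun e he => hWbot e he _

/-- Submodularity of the Hamiltonian for a configuration `φ` with boundary condition `ψ` and a
configuration `θ` with boundary condition `ψ + c`, each shifted back to boundary condition `ψ`
before its energy is taken. The sign of `c` matters: it makes the minimum inherit `ψ`. -/
lemma gibbsH_shift_submodular (hWbot : ∀ e ∈ 𝔈, ∀ r : ℝ, W e r ≠ ⊥)
    (hWconv : ∀ e ∈ 𝔈, ∀ a b t : ℝ, 0 ≤ t → t ≤ 1 →
      W e (t * a + (1 - t) * b) ≤ (t : EReal) * W e a + ((1 - t : ℝ) : EReal) * W e b)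
    {c : ℤ} (hc : 0 ≤ c) (φ θ : ↥Λ → ℤ) :
    gibbsH Λ 𝔈 W ψ (φ ⊓ θ) + gibbsH Λ 𝔈 W ψ (φ ⊔ θ - fun _ => c)
      ≤ gibbsH Λ 𝔈 W ψ φ + gibbsH Λ 𝔈 W ψ (θ - fun _ => c) := by
  have hinf : ∀ v, extBC Λ ψ (φ ⊓ θ) v
      = extBC Λ ψ φ v ⊓ (extBC Λ ψ (θ - fun _ => c) v + c) := fun v => by
    unfold extBC
    split_ifs <;> simp [hc]
  have hsup : ∀ v, extBC Λ ψ (φ ⊔ θ - fun _ => c) v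
      = extBC Λ ψ φ v ⊔ (extBC Λ ψ (θ - fun _ => c) v + c) - c := fun v => by
    unfold extBC
    split_ifs <;> simp [hc]
  unfold gibbsH
  rw [← Finset.sum_add_distrib, ← Finset.sum_add_distrib]
  refine Finset.sum_le_sum fun e he => ?_
  have key := convex_edge_submodular (W e) (hWbot e he) (hWconv e he)
    (extBC Λ ψ φ e.1) (extBC Λ ψ φ e.2)
    (extBC Λ ψ (θ - fun _ => c) e.1 + c) (extBC Λ ψ (θ - fun _ => c) e.2 + c)
  rw [hinf, hinf, hsup, hsup, sub_sub_sub_cancel_right]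
  rwa [add_sub_add_right_eq_sub] at key

end Gibbs

/-- In the finite-volume Gibbs setup over `E = ℤ` (finite volume `Λ` with
distinguished `x₀ ∈ Λ`, disjoint boundary `B` with boundary condition `ψ`, edges `𝔈` between
distinct vertices of `Λ ∪ B` carrying convex `(-∞,∞]`-valued potentials), the single-site
partition function `f a = Σ_{φ : Λ → ℤ, φ x₀ = a} e^{-H(φ)}` is log-concave:
`f a ^ 2 ≥ f (a+c) * f (a-c)` for all `a, c ∈ ℤ`. -/
theorem gibbs_single_site_log_concave
    {ι : Type*} [DecidableEq ι]
    (Λ B : Finset ι) (hdisj : Disjoint Λ B) (x₀ : ι) (hx₀ : x₀ ∈ Λ) (ψ : ι → ℤ)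
    (𝔈 : Finset (ι × ι)) (h𝔈 : ∀ e ∈ 𝔈, e.1 ∈ Λ ∪ B ∧ e.2 ∈ Λ ∪ B ∧ e.1 ≠ e.2)
    (W : ι × ι → ℝ → EReal)
    (hWbot : ∀ e ∈ 𝔈, ∀ r : ℝ, W e r ≠ ⊥)
    (hWconv : ∀ e ∈ 𝔈, ∀ a b t : ℝ, 0 ≤ t → t ≤ 1 →
      W e (t * a + (1 - t) * b) ≤ (t : EReal) * W e a + ((1 - t : ℝ) : EReal) * W e b)
    (f : ℤ → ℝ≥0∞)
    (hf : ∀ a : ℤ, f a = ∑' φ : {φ : ↥Λ → ℤ // φ ⟨x₀, hx₀⟩ = a},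
      expNegE (gibbsH Λ 𝔈 W ψ φ.1))
    (hfin : ∀ a : ℤ, f a ≠ ⊤)
    (hpos : 0 < ∑' a : ℤ, f a) (htot : (∑' a : ℤ, f a) ≠ ⊤) :
    ∀ a c : ℤ, f (a + c) * f (a - c) ≤ f a * f a := by
  classical
  -- `g a φ` is the weight of `φ` if `φ x₀ = a`, and `0` otherwise.
  set g : ℤ → (↥Λ → ℤ) → ℝ≥0∞ := fun a =>
    Set.indicator {φ | φ ⟨x₀, hx₀⟩ = a} (fun φ => expNegE (gibbsH Λ 𝔈 W ψ φ)) with hg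
  have hfg : ∀ a, f a = ∑' φ, g a φ := fun a => by
    rw [hf a]
    exact tsum_subtype {φ : ↥Λ → ℤ | φ ⟨x₀, hx₀⟩ = a} (fun φ => expNegE (gibbsH Λ 𝔈 W ψ φ))
  have hfg' : ∀ a c, f a = ∑' φ, g a (φ - fun _ => c) := fun a c => by
    rw [hfg a]
    exact ((Equiv.subRight (fun _ : ↥Λ => c)).tsum_eq (g a)).symm
  have hb := gibbsH_ne_bot Λ 𝔈 W ψ hWbot
  have hgtop : ∀ a φ, g a φ ≠ ⊤ := fun a φ => by
    simp only [hg, Set.indicator]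
    split_ifs
    · exact expNegE_ne_top (hb φ)
    · simp
  have main : ∀ a c : ℤ, 0 ≤ c → f (a + c) * f (a - c) ≤ f a * f a := by
    intro a c hc
    calc f (a + c) * f (a - c)
        = (∑' φ, g (a + c) φ) * ∑' φ, g (a - c) (φ - fun _ => c) := by rw [← hfg, ← hfg']
      _ ≤ (∑' φ, g a φ) * ∑' φ, g a (φ - fun _ => c) := by
        refine tsum_mul_tsum_le_of_four_functions _ _ _ _ (fun _ => hgtop _ _)
          (fun _ => hgtop _ _) (fun _ => hgtop _ _) (fun _ => hgtop _ _) fun φ θ => ?_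
        by_cases h1 : φ ⟨x₀, hx₀⟩ = a + c
        swap
        · simp [hg, h1]
        by_cases h2 : θ ⟨x₀, hx₀⟩ = a
        swap
        · simp [hg, h2]
        simp only [hg]
        rw [Set.indicator_of_mem (by simpa using h1), Set.indicator_of_mem (by simp [h2]),
          Set.indicator_of_mem (by simp [h1, h2, hc]), Set.indicator_of_mem (by simp [h1, h2, hc]),
          ← expNegE_add (hb _) (hb _), ← expNegE_add (hb _) (hb _)]
        exact expNegE_antitone (gibbsH_shift_submodular Λ 𝔈 W ψ hWbot hWconv hc φ θ)
      _ = f a * f a := by rw [← hfg, ← hfg']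
  intro a c
  rcases le_total 0 c with hc | hc
  · exact main a c hc
  · have := main a (-c) (by lia)
    rwa [← sub_eq_add_neg, sub_neg_eq_add, mul_comm] at this
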